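/- Fix real numbers λ₁ > λ₂ > λ₃ > λ₄ with λᵢ+λⱼ > 0 for all i ≠ j and λ₁²+λ₄² ≠ λ₂²+λ₃². Let a, b be real numbers with a² > b², and let p = (a,0,0,b,0,0) ∈ ℝ⁶ (the equilibrium M¹_{a,b} in the Cartan subalgebra t₁). Then the Jacobian matrix DG(p) of the vector field G at p has complex eigenvalues consisting of 0 with multiplicity 2 together with four distinct nonzero purely imaginary numbers iA, −iA, iB, −iB with A ≠ B, A, B > 0. (This is the center-center type spectrum underlying the nonlinear stability of M¹_{a,b}.) -/

import Mathlib

/-!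
Only the `x₂, x₃, y₂, y₃` directions contribute to the linearization at `p = (a,0,0,b,0,0)`, and
there it exchanges the planes `(x₂, y₂)` and `(x₃, y₃)`; hence the characteristic polynomial is
`X² (X⁴ + S X² + D)`. With `α = λ₁²-λ₃²`, `β = λ₂²-λ₄²`, `γ = λ₁²-λ₂²`, `δ = λ₃²-λ₄²` (all positive),
`S = 4((αγ+βδ)a² - (αδ+βγ)b²)` and `D = 16αβγδ(a²-b²)²`. Since `α - β = γ - δ =: k`, one has
`S = 4((αδ+βγ)(a²-b²) + k²a²)`, where `k = λ₁²+λ₄²-λ₂²-λ₃² ≠ 0`. As `(αδ+βγ)² ≥ 4αβγδ`,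
this gives `S > 0`, `D > 0` and `S² > 4D`, so the quadratic `t² + S t + D` has two distinct negative
roots `-A²` and `-B²` (`exists_freq`).
-/

open Polynomial

/-- The Hamiltonian vector field `G` of the integral `I` of the SO(4) free
rigid body with respect to the minus Lie–Poisson structure, in coordinates
`(x₁,x₂,x₃,y₁,y₂,y₃) = (p 0, p 1, p 2, p 3, p 4, p 5)`. -/
noncomputable def rbG (l1 l2 l3 l4 : ℝ) (p : Fin 6 → ℝ) : Fin 6 → ℝ :=
  ![2*(l2^2-l3^2) * (p 1 * p 2 - p 4 * p 5),
    2*(l3^2-l1^2) * (p 2 * p 0 - p 5 * p 3),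
    2*(l1^2-l2^2) * (p 0 * p 1 - p 3 * p 4),
    2*(l4^2-l1^2) * (p 1 * p 5 - p 2 * p 4),
    2*(l4^2-l2^2) * (p 2 * p 3 - p 0 * p 5),
    2*(l4^2-l3^2) * (p 0 * p 4 - p 1 * p 3)]

/-- The Jacobian matrix of `G` at a point `p`. -/
noncomputable def JacG (l1 l2 l3 l4 : ℝ) (p : Fin 6 → ℝ) :
    Matrix (Fin 6) (Fin 6) ℝ :=
  Matrix.of fun i j => fderiv ℝ (fun q => rbG l1 l2 l3 l4 q i) p (Pi.single j 1)

/-- A quadratic `t² + S t + D` with `S, D > 0` and positive discriminant has two distinct negative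
roots `-A²`, `-B²`, recorded through Vieta's relations. -/
lemma exists_freq (S D : ℝ) (hS : 0 < S) (hD : 0 < D) (h : 4 * D < S ^ 2) :
    ∃ A B : ℝ, 0 < A ∧ 0 < B ∧ A ≠ B ∧ A ^ 2 + B ^ 2 = S ∧ A ^ 2 * B ^ 2 = D := by
  have hr : 0 < √(S ^ 2 - 4 * D) := Real.sqrt_pos.2 (by linarith)
  have hr2 : √(S ^ 2 - 4 * D) ^ 2 = S ^ 2 - 4 * D := Real.sq_sqrt (by linarith)
  set r := √(S ^ 2 - 4 * D)
  have hrS : r < S := by nlinarith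
  have hA : √((S + r) / 2) ^ 2 = (S + r) / 2 := Real.sq_sqrt (by linarith)
  have hB : √((S - r) / 2) ^ 2 = (S - r) / 2 := Real.sq_sqrt (by linarith)
  refine ⟨√((S + r) / 2), √((S - r) / 2), Real.sqrt_pos.2 (by linarith),
    Real.sqrt_pos.2 (by linarith), fun hAB => ?_, ?_, ?_⟩
  · rw [hAB] at hA
    linarith
  · rw [hA, hB]
    ring
  · rw [hA, hB]
    nlinarith

lemma fderiv_quad (c : ℝ) (i j k l : Fin 6) (p v : Fin 6 → ℝ) :
    fderiv ℝ (fun q : Fin 6 → ℝ => c * (q i * q j - q k * q l)) p v =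
      c * (p i * v j + p j * v i - (p k * v l + p l * v k)) := by
  have h (m : Fin 6) : HasFDerivAt (fun q : Fin 6 → ℝ => q m)
      (ContinuousLinearMap.proj (R := ℝ) (φ := fun _ : Fin 6 => ℝ) m) p := hasFDerivAt_apply m p
  have H := ((((h i).mul (h j)).sub ((h k).mul (h l))).const_mul c).fderiv
  have H' := congrArg (fun L => L v) H
  simpa using H'

lemma JacG_eq (l1 l2 l3 l4 a b : ℝ) :
    JacG l1 l2 l3 l4 ![a, 0, 0, b, 0, 0] =
      !![0, 0, 0, 0, 0, 0;
        0, 0, 2*(l3^2-l1^2)*a, 0, 0, -(2*(l3^2-l1^2)*b);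
        0, 2*(l1^2-l2^2)*a, 0, 0, -(2*(l1^2-l2^2)*b), 0;
        0, 0, 0, 0, 0, 0;
        0, 0, 2*(l4^2-l2^2)*b, 0, 0, -(2*(l4^2-l2^2)*a);
        0, -(2*(l4^2-l3^2)*b), 0, 0, 2*(l4^2-l3^2)*a, 0] := by
  ext i j
  fin_cases i <;> simp only [JacG, rbG, Matrix.of_apply, Fin.zero_eta, Fin.mk_one, Fin.reduceFinMk,
    Matrix.cons_val] <;> rw [fderiv_quad] <;> fin_cases j <;> simp

/-- The characteristic polynomial of a matrix with the sparsity pattern of the linearization. -/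
lemma charpoly_sparse (c d e f g h k l : ℂ) :
    (!![0, 0, 0, 0, 0, 0;
        0, 0, c, 0, 0, d;
        0, e, 0, 0, f, 0;
        0, 0, 0, 0, 0, 0;
        0, 0, g, 0, 0, h;
        0, k, 0, 0, l, 0] : Matrix (Fin 6) (Fin 6) ℂ).charpoly =
      X ^ 2 * (X ^ 4 - C (c * e + d * k + g * f + h * l) * X ^ 2 +
        C ((c * h - d * g) * (e * l - f * k))) := by
  have hM : Matrix.charmatrix (!![0, 0, 0, 0, 0, 0;
        0, 0, c, 0, 0, d;
        0, e, 0, 0, f, 0;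
        0, 0, 0, 0, 0, 0;
        0, 0, g, 0, 0, h;
        0, k, 0, 0, l, 0] : Matrix (Fin 6) (Fin 6) ℂ) =
      !![X, 0, 0, 0, 0, 0;
        0, X, -C c, 0, 0, -C d;
        0, -C e, X, 0, -C f, 0;
        0, 0, 0, X, 0, 0;
        0, 0, -C g, 0, X, -C h;
        0, -C k, 0, 0, -C l, X] := by
    ext1 i j
    fin_cases i <;> fin_cases j <;> simp
  rw [Matrix.charpoly, hM]
  simp [Matrix.det_succ_row_zero, Fin.sum_univ_succ, Fin.succAbove]
  ring

/-- at the equilibrium `M¹_{a,b} = (a,0,0,b,0,0)` with `a² > b²`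
(and `λ₁²+λ₄² ≠ λ₂²+λ₃²`), the Jacobian of `G` has eigenvalues `0` with
multiplicity 2 together with four distinct nonzero purely imaginary numbers
`±iA, ±iB`, `A ≠ B`, `A, B > 0` (center-center spectrum). -/
theorem stmt10 (l1 l2 l3 l4 : ℝ)
    (h12 : l2 < l1) (h23 : l3 < l2) (h34 : l4 < l3)
    (hp12 : 0 < l1 + l2) (hp13 : 0 < l1 + l3) (hp14 : 0 < l1 + l4)
    (hp23 : 0 < l2 + l3) (hp24 : 0 < l2 + l4) (hp34 : 0 < l3 + l4)
    (hgen : l1^2 + l4^2 ≠ l2^2 + l3^2)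
    (a b : ℝ) (hab : b^2 < a^2) :
    ∃ A B : ℝ, 0 < A ∧ 0 < B ∧ A ≠ B ∧
      ((JacG l1 l2 l3 l4 ![a, 0, 0, b, 0, 0]).map Complex.ofReal).charpoly =
        X^2 * (X - C ((A : ℂ) * Complex.I)) * (X + C ((A : ℂ) * Complex.I)) *
          (X - C ((B : ℂ) * Complex.I)) * (X + C ((B : ℂ) * Complex.I)) := by
  have hα : 0 < l1^2 - l3^2 := by nlinarith
  have hβ : 0 < l2^2 - l4^2 := by nlinarith
  have hγ : 0 < l1^2 - l2^2 := by nlinarith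
  have hδ : 0 < l3^2 - l4^2 := by nlinarith
  have hk : 0 < (l1^2 + l4^2 - l2^2 - l3^2)^2 :=
    sq_pos_of_ne_zero fun h => hgen (by linarith)
  have hab' : 0 < a^2 - b^2 := by linarith
  have ha : 0 < a^2 := by nlinarith [sq_nonneg b]
  -- in the notation of the header `u = (αδ+βγ)(a²-b²)`, `w = k²a²`, `S = 4(u + w)`; the `D` here
  -- is the constant term divided by 16
  obtain ⟨u, hu⟩ : ∃ u, u = ((l1^2-l3^2)*(l3^2-l4^2) + (l2^2-l4^2)*(l1^2-l2^2)) * (a^2-b^2) :=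
    ⟨_, rfl⟩
  obtain ⟨w, hw⟩ : ∃ w, w = (l1^2 + l4^2 - l2^2 - l3^2)^2 * a^2 := ⟨_, rfl⟩
  obtain ⟨D, hD⟩ : ∃ D, D = (l1^2-l3^2)*(l2^2-l4^2)*(l1^2-l2^2)*(l3^2-l4^2) * (a^2-b^2)^2 :=
    ⟨_, rfl⟩
  have hu0 : 0 < u := by rw [hu]; positivity
  have hw0 : 0 < w := by rw [hw]; positivity
  have hD0 : 0 < D := by rw [hD]; positivity
  have huD : 4 * D ≤ u^2 := by
    have : u^2 - 4 * D =
        (((l1^2-l3^2)*(l3^2-l4^2) - (l2^2-l4^2)*(l1^2-l2^2)) * (a^2-b^2))^2 := by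
      rw [hu, hD]
      ring
    linarith [sq_nonneg (((l1^2-l3^2)*(l3^2-l4^2) - (l2^2-l4^2)*(l1^2-l2^2)) * (a^2-b^2))]
  obtain ⟨A, B, hA, hB, hAB, hsum, hprod⟩ := exists_freq (4 * (u + w)) (16 * D)
    (by positivity) (by positivity) (by nlinarith [mul_pos hu0 hw0, mul_pos hw0 hw0])
  refine ⟨A, B, hA, hB, hAB, ?_⟩
  have hmap : (JacG l1 l2 l3 l4 ![a, 0, 0, b, 0, 0]).map Complex.ofReal =
      !![0, 0, 0, 0, 0, 0;
        0, 0, ((2*(l3^2-l1^2)*a : ℝ) : ℂ), 0, 0, ((-(2*(l3^2-l1^2)*b) : ℝ) : ℂ);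
        0, ((2*(l1^2-l2^2)*a : ℝ) : ℂ), 0, 0, ((-(2*(l1^2-l2^2)*b) : ℝ) : ℂ), 0;
        0, 0, 0, 0, 0, 0;
        0, 0, ((2*(l4^2-l2^2)*b : ℝ) : ℂ), 0, 0, ((-(2*(l4^2-l2^2)*a) : ℝ) : ℂ);
        0, ((-(2*(l4^2-l3^2)*b) : ℝ) : ℂ), 0, 0, ((2*(l4^2-l3^2)*a : ℝ) : ℂ), 0] := by
    rw [JacG_eq]
    ext i j
    fin_cases i <;> fin_cases j <;> simp
  rw [hmap, charpoly_sparse]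
  simp only [← Complex.ofReal_mul, ← Complex.ofReal_add, ← Complex.ofReal_sub]
  have hI : (C Complex.I : ℂ[X])^2 = -1 := by
    rw [← C_pow, Complex.I_sq, C_neg, C_1]
  have hfac : X^2 * (X - C ((A : ℂ) * Complex.I)) * (X + C ((A : ℂ) * Complex.I)) *
      (X - C ((B : ℂ) * Complex.I)) * (X + C ((B : ℂ) * Complex.I)) =
      X^2 * (X^4 - C ((-(A^2 + B^2) : ℝ) : ℂ) * X^2 + C ((A^2 * B^2 : ℝ) : ℂ)) := by
    push_cast
    simp only [C_mul, C_neg, C_add, C_pow]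
    linear_combination
      (X^2 * (-C (A : ℂ)^2 * X^2 - C (B : ℂ)^2 * X^2
        + C (A : ℂ)^2 * C (B : ℂ)^2 * (C Complex.I^2 - 1))) * hI
  rw [hfac, hsum, hprod]
  congr 3
  · congr 3
    rw [hu, hw]
    ring
  · congr 1
    rw [hD]
    ring
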